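/- Define, for 0 < x < 27/4 and z := 4x/27, the function V(x) := (1+√(1−z))^{1/3} · z^{−2/3} / (9π√(3(1−z))) + (1+√(1−z))^{−1/3} · z^{−1/3} / (9π√(3(1−z))). Then for every natural number n, ∫₀^{27/4} x^n V(x) dx = C(3n, n); in particular V is a probability density on (0, 27/4). -/

import Mathlib

open MeasureTheory Real

/-- Generalized binomial coefficient `C(a,n) = a(a-1)⋯(a-n+1)/n!`. -/
noncomputable def gbinom (a : ℝ) (n : ℕ) : ℝ :=
  (∏ i ∈ Finset.range n, (a - i)) / (n.factorial : ℝ)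

/-- The density function `V_{3,0}` of the measure `ν(3,0)`. -/
noncomputable def V30 (x : ℝ) : ℝ :=
  (1 + Real.sqrt (1 - 4 * x / 27)) ^ ((1:ℝ)/3) * (4 * x / 27) ^ (-(2:ℝ)/3)
      / (9 * Real.pi * Real.sqrt (3 * (1 - 4 * x / 27)))
    + (1 + Real.sqrt (1 - 4 * x / 27)) ^ (-(1:ℝ)/3) * (4 * x / 27) ^ (-(1:ℝ)/3)
      / (9 * Real.pi * Real.sqrt (3 * (1 - 4 * x / 27)))

/-!
The substitution `x = 27 t (1 - t)`, `0 < t < 1/2`, rationalises the density: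
`√(1 - 4x/27) = 1 - 2t` and `1 + √(1 - 4x/27) = 2(1 - t)`, so that `x ^ s V(x) dx` becomes a
constant multiple of `(k(t) + k(1 - t)) dt` with `k(t) = t ^ (s - 2/3) (1 - t) ^ (s - 1/3)`. The
reflected summand supplies the missing half `1/2 < t < 1`, hence the moments are, up to constants,
the beta integrals `B(s + 1/3, s + 2/3)`. For `s = n` they are evaluated by the recursion of `Γ`,
started from the reflection formula at `1/3`.
-/

theorem gbinom_natCast (m n : ℕ) : gbinom m n = m.choose n := by
  rw [gbinom, Nat.cast_choose_eq_descPochhammer_div, descPochhammer_eval_eq_prod_range]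

section ChangeOfVariables

variable {E : Type*} [NormedAddCommGroup E] [NormedSpace ℝ E]

theorem integral_add_comp_reflect {f : ℝ → E} {a b : ℝ} (hf : IntervalIntegrable f volume a b) :
    ∫ t in a..(a + b) / 2, (f t + f (a + b - t)) = ∫ t in a..b, f t := by
  have midpoint_mem : (a + b) / 2 ∈ Set.uIcc a b := by
    rcases le_total a b with hab | hab
    · exact Set.mem_uIcc_of_le (by linarith) (by linarith)
    · exact Set.mem_uIcc_of_ge (by linarith) (by linarith)
  have hleft : IntervalIntegrable f volume a ((a + b) / 2) :=
    hf.mono_set (Set.uIcc_subset_uIcc_left midpoint_mem)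
  have hright : IntervalIntegrable f volume ((a + b) / 2) b :=
    hf.mono_set (Set.uIcc_subset_uIcc_right midpoint_mem)
  have hreflect : IntervalIntegrable (fun t ↦ f (a + b - t)) volume a ((a + b) / 2) := by
    convert! (hright.comp_sub_left (a + b)).symm using 1 <;> ring
  rw [intervalIntegral.integral_add hleft hreflect, intervalIntegral.integral_comp_sub_left,
    show a + b - (a + b) / 2 = (a + b) / 2 by ring, add_sub_cancel_left,
    intervalIntegral.integral_add_adjacent_intervals hleft hright]

theorem integral_comp_mul_one_sub (f : ℝ → E) (c : ℝ) :
    ∫ t in (0 : ℝ)..1 / 2, (c * (1 - 2 * t)) • f (c * (t * (1 - t))) = ∫ x in 0..c / 4, f x := by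
  have hderiv (t : ℝ) : HasDerivAt (fun t ↦ t * (1 - t)) (1 - 2 * t) t := by
    convert! (hasDerivAt_id' t).mul ((hasDerivAt_id' t).const_sub 1) using 1
    ring
  have hnonneg : ∀ t ∈ Set.Ioo (min (0 : ℝ) (1 / 2)) (max 0 (1 / 2)), 0 ≤ 1 - 2 * t := by
    intro t ht
    have : t < 1 / 2 := by simpa using ht.2
    linarith
  calc ∫ t in (0 : ℝ)..1 / 2, (c * (1 - 2 * t)) • f (c * (t * (1 - t)))
    _ = c • ∫ t in (0 : ℝ)..1 / 2, (1 - 2 * t) • f (c * (t * (1 - t))) := by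
        simp only [mul_smul, intervalIntegral.integral_smul]
    _ = c • ∫ y in 0 * (1 - 0)..1 / 2 * (1 - 1 / 2), f (c * y) := by
        rw [← intervalIntegral.integral_deriv_smul_comp_of_deriv_nonneg (by fun_prop)
          (fun t _ ↦ hderiv t) hnonneg]
        rfl
    _ = ∫ x in 0..c / 4, f x := by
        rw [intervalIntegral.smul_integral_comp_mul_left]
        congr 1 <;> ring

end ChangeOfVariables

section BetaIntegral

/-- The integrand of Euler's beta integral `B(a, b)`, on `(0, 1)`. -/
noncomputable def betaKernel (a b t : ℝ) : ℝ :=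
  t ^ (a - 1) * (1 - t) ^ (b - 1)

theorem ofReal_betaKernel (a b : ℝ) {t : ℝ} (ht : t ∈ Set.Icc 0 1) :
    (betaKernel a b t : ℂ) = (t : ℂ) ^ ((a : ℂ) - 1) * (1 - (t : ℂ)) ^ ((b : ℂ) - 1) := by
  rw [betaKernel, Complex.ofReal_mul, Complex.ofReal_cpow ht.1,
    Complex.ofReal_cpow (sub_nonneg.2 ht.2)]
  push_cast
  rfl

variable {a b : ℝ}

theorem intervalIntegrable_betaKernel (ha : 0 < a) (hb : 0 < b) :
    IntervalIntegrable (betaKernel a b) volume 0 1 := by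
  have hconv := Complex.betaIntegral_convergent (u := a) (v := b) (by simpa) (by simpa)
  rw [intervalIntegrable_iff_integrableOn_Ioc_of_le zero_le_one] at hconv ⊢
  refine IntegrableOn.congr_fun hconv.re (fun t ht ↦ ?_) measurableSet_Ioc
  simp only [← ofReal_betaKernel a b (Set.Ioc_subset_Icc_self ht), RCLike.re_to_complex,
    Complex.ofReal_re]

theorem integral_betaKernel (ha : 0 < a) (hb : 0 < b) :
    ∫ t in (0 : ℝ)..1, betaKernel a b t = Gamma a * Gamma b / Gamma (a + b) := by
  have hcoe : ((∫ t in (0 : ℝ)..1, betaKernel a b t : ℝ) : ℂ) = Complex.betaIntegral a b := by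
    rw [← intervalIntegral.integral_ofReal, Complex.betaIntegral]
    refine intervalIntegral.integral_congr fun t ht ↦ ofReal_betaKernel a b ?_
    rwa [Set.uIcc_of_le zero_le_one] at ht
  rw [← ProbabilityTheory.beta, ProbabilityTheory.beta_eq_betaIntegralReal a b ha hb, ← hcoe,
    Complex.ofReal_re]

end BetaIntegral

theorem mul_rpow_mul_mul_mul_rpow {c u v : ℝ} (hc : 0 < c) (hu : 0 < u) (hv : 0 < v) (p q : ℝ) :
    (c * u) ^ p * ((c * u) * (c * v)) ^ q = c ^ (p + 2 * q) * (u ^ (p + q) * v ^ q) := by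
  rw [mul_rpow (x := c * u) (by positivity) (by positivity), mul_rpow hc.le hu.le,
    mul_rpow hc.le hu.le, mul_rpow hc.le hv.le, two_mul, rpow_add hc, rpow_add hc, rpow_add hu]
  ring

theorem V30_comp_mul_one_sub {t : ℝ} (ht₀ : 0 < t) (ht : t < 1 / 2) :
    27 * (1 - 2 * t) * V30 (27 * (t * (1 - t))) =
      √3 / (2 * π) * (betaKernel (1 / 3) (2 / 3) t + betaKernel (1 / 3) (2 / 3) (1 - t)) := by
  have hu : 0 < 1 - t := by linarith
  have hw : 0 < 1 - 2 * t := by linarith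
  have hz : 4 * (27 * (t * (1 - t))) / 27 = (2 * (1 - t)) * (2 * t) := by ring
  have hsq : 1 - (2 * (1 - t)) * (2 * t) = (1 - 2 * t) ^ 2 := by ring
  have hfirst : (2 * (1 - t)) ^ ((1 : ℝ) / 3) * ((2 * (1 - t)) * (2 * t)) ^ (-(2 : ℝ) / 3) =
      betaKernel (1 / 3) (2 / 3) t / 2 := by
    rw [mul_rpow_mul_mul_mul_rpow two_pos hu ht₀, betaKernel,
      show (1 : ℝ) / 3 + 2 * (-(2 : ℝ) / 3) = -1 by norm_num, rpow_neg_one]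
    ring_nf
  have hsecond : (2 * (1 - t)) ^ (-(1 : ℝ) / 3) * ((2 * (1 - t)) * (2 * t)) ^ (-(1 : ℝ) / 3) =
      betaKernel (1 / 3) (2 / 3) (1 - t) / 2 := by
    rw [mul_rpow_mul_mul_mul_rpow two_pos hu ht₀, betaKernel,
      show -(1 : ℝ) / 3 + 2 * (-(1 : ℝ) / 3) = -1 by norm_num, rpow_neg_one]
    ring_nf
  have hsqrt : √(3 * (1 - 2 * t) ^ 2) = √3 * (1 - 2 * t) := by
    rw [sqrt_mul zero_le_three, sqrt_sq hw.le]
  rw [V30, hz, hsq, sqrt_sq hw.le, show 1 + (1 - 2 * t) = 2 * (1 - t) by ring, hfirst, hsecond,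
    hsqrt]
  have hthree : √3 ^ 2 = 3 := sq_sqrt zero_le_three
  field_simp
  rw [hthree]
  ring

theorem mul_one_sub_rpow_mul_betaKernel (a b s : ℝ) {t : ℝ} (ht₀ : 0 < t) (ht₁ : t < 1) :
    (t * (1 - t)) ^ s * betaKernel a b t = betaKernel (s + a) (s + b) t := by
  have hu : 0 < 1 - t := sub_pos.2 ht₁
  rw [betaKernel, betaKernel, mul_rpow ht₀.le hu.le, add_sub_assoc, add_sub_assoc, rpow_add ht₀,
    rpow_add hu]
  ring

theorem rpow_mul_V30_comp_mul_one_sub (s : ℝ) {t : ℝ} (ht₀ : 0 < t) (ht : t < 1 / 2) :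
    27 * (1 - 2 * t) * ((27 * (t * (1 - t))) ^ s * V30 (27 * (t * (1 - t)))) =
      27 ^ s * (√3 / (2 * π)) *
        (betaKernel (s + 1 / 3) (s + 2 / 3) t + betaKernel (s + 1 / 3) (s + 2 / 3) (1 - t)) := by
  have hu : 0 < 1 - t := by linarith
  rw [mul_left_comm, V30_comp_mul_one_sub ht₀ ht, mul_rpow (by norm_num) (by positivity),
    ← mul_one_sub_rpow_mul_betaKernel _ _ s ht₀ (by linarith),
    ← mul_one_sub_rpow_mul_betaKernel _ _ s hu (by linarith), sub_sub_cancel, mul_comm (1 - t) t]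
  ring

theorem integral_rpow_mul_V30 {s : ℝ} (hs : -(1 / 3) < s) :
    ∫ x in (0 : ℝ)..27 / 4, x ^ s * V30 x =
      27 ^ s * (√3 / (2 * π)) * (Gamma (s + 1 / 3) * Gamma (s + 2 / 3) / Gamma (2 * s + 1)) := by
  have ha : 0 < s + 1 / 3 := by linarith
  have hb : 0 < s + 2 / 3 := by linarith
  have hfold := integral_add_comp_reflect (intervalIntegrable_betaKernel ha hb)
  rw [zero_add] at hfold
  calc ∫ x in (0 : ℝ)..27 / 4, x ^ s * V30 x
    _ = ∫ t in (0 : ℝ)..1 / 2,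
          27 * (1 - 2 * t) * ((27 * (t * (1 - t))) ^ s * V30 (27 * (t * (1 - t)))) :=
        (integral_comp_mul_one_sub (fun x ↦ x ^ s * V30 x) 27).symm
    _ = ∫ t in (0 : ℝ)..1 / 2, 27 ^ s * (√3 / (2 * π)) *
          (betaKernel (s + 1 / 3) (s + 2 / 3) t + betaKernel (s + 1 / 3) (s + 2 / 3) (1 - t)) :=
        intervalIntegral.integral_congr_Ioo_of_le (by norm_num) fun t ht ↦
          rpow_mul_V30_comp_mul_one_sub s ht.1 ht.2
    _ = 27 ^ s * (√3 / (2 * π)) * ∫ t in (0 : ℝ)..1, betaKernel (s + 1 / 3) (s + 2 / 3) t := by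
        rw [intervalIntegral.integral_const_mul, hfold]
    _ = _ := by
        rw [integral_betaKernel ha hb, show s + 1 / 3 + (s + 2 / 3) = 2 * s + 1 by ring]

theorem Gamma_one_third_mul_Gamma_two_thirds : Gamma (1 / 3) * Gamma (2 / 3) = 2 * π / √3 := by
  have hreflection := Gamma_mul_Gamma_one_sub (1 / 3)
  rw [show (1 : ℝ) - 1 / 3 = 2 / 3 by norm_num, mul_one_div, sin_pi_div_three] at hreflection
  rw [hreflection]
  field_simp

theorem Gamma_nat_add_one_third_mul_Gamma_nat_add_two_thirds (n : ℕ) :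
    Gamma (n + 1 / 3) * Gamma (n + 2 / 3) =
      2 * π / √3 * ((3 * n).factorial / (27 ^ n * n.factorial)) := by
  induction n with
  | zero => simpa using Gamma_one_third_mul_Gamma_two_thirds
  | succ n ih =>
    have hthird : Gamma ((n + 1 : ℕ) + 1 / 3) = (n + 1 / 3) * Gamma (n + 1 / 3) := by
      rw [← Gamma_add_one (by positivity), Nat.cast_succ, add_right_comm]
    have htwo_thirds : Gamma ((n + 1 : ℕ) + 2 / 3) = (n + 2 / 3) * Gamma (n + 2 / 3) := by
      rw [← Gamma_add_one (by positivity), Nat.cast_succ, add_right_comm]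
    rw [hthird, htwo_thirds, mul_mul_mul_comm, ih, show 3 * (n + 1) = 3 * n + 1 + 1 + 1 by ring]
    simp only [Nat.factorial_succ]
    push_cast
    field_simp
    ring

theorem density_p_three (n : ℕ) :
    (∫ x in (0:ℝ)..(27/4), x ^ n * V30 x) = gbinom (3 * (n : ℝ)) n := by
  have moment : ∫ x in (0 : ℝ)..27 / 4, x ^ n * V30 x = 27 ^ n * (√3 / (2 * π)) *
      (Gamma (n + 1 / 3) * Gamma (n + 2 / 3) / Gamma (2 * n + 1)) := by
    simpa only [rpow_natCast] using
      integral_rpow_mul_V30 (s := n) (by linarith [n.cast_nonneg (α := ℝ)])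
  have hGamma : Gamma (2 * n + 1) = (2 * n).factorial := by
    exact_mod_cast Gamma_nat_eq_factorial (2 * n)
  have hbinom : gbinom (3 * n) n = (3 * n).factorial / (n.factorial * (2 * n).factorial) := by
    rw [← Nat.cast_ofNat, ← Nat.cast_mul, gbinom_natCast, Nat.cast_choose ℝ (by lia),
      show 3 * n - n = 2 * n by lia]
  rw [moment, Gamma_nat_add_one_third_mul_Gamma_nat_add_two_thirds, hGamma, hbinom]
  field_simp
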